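/- Let g : ℝ^n → [0,∞) be continuous, α be a locally Lipschitz class K function, and suppose v, w : ℝ^n × [0,∞) → [0,∞) are continuous and satisfy β_α(v(x,T), T) = w(x,T) for all (x,T) ∈ ℝ^n × [0,∞). Then w is a viscosity solution on ℝ^n × (0,∞) of max{ ∂_T w − H(x, ∇w), w − β_α(g(x), T) } = 0 if and only if v is a viscosity solution on ℝ^n × (0,∞) of max{ ∂_T v − H_α(x, v, ∇v), v − g(x) } = 0, where H(x,λ) = max_{u ∈ U} λ · f(x,u) and H_α(x,r,λ) = H(x,λ) + α(r). -/

import Mathlib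

open Set Filter MeasureTheory Topology

noncomputable section

/-- `α : [0,∞) → [0,∞)` is a class `K` function: continuous, strictly increasing, `α 0 = 0`. -/
def IsClassK (α : ℝ → ℝ) : Prop :=
  ContinuousOn α (Set.Ici 0) ∧ StrictMonoOn α (Set.Ici 0) ∧ α 0 = 0

/-- `α` is a locally Lipschitz class `K` function on `[0,∞)`. -/
def IsLocallyLipschitzClassK (α : ℝ → ℝ) : Prop :=
  IsClassK α ∧
    ∀ x ∈ Set.Ici (0 : ℝ), ∃ K : NNReal, ∃ s ∈ nhdsWithin x (Set.Ici (0 : ℝ)),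
      LipschitzOnWith K α s

/-- `β` is the function `β_α`: for each `r ≥ 0`, `t ↦ β r t` solves `y' = -α y`, `y 0 = r`,
staying in `[0, r]` for all `t ≥ 0`. -/
def IsBetaFor (α : ℝ → ℝ) (β : ℝ → ℝ → ℝ) : Prop :=
  ∀ r : ℝ, 0 ≤ r →
    β r 0 = r ∧ ∀ t : ℝ, 0 ≤ t →
      0 ≤ β r t ∧ β r t ≤ r ∧ HasDerivWithinAt (β r) (-α (β r t)) (Set.Ici 0) t

/-- `v` is a viscosity solution on `ℝⁿ × (0,∞)` of the HJ-PDE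
`max { ∂_T v - H_α(x, v, ∇v), v - g x } = 0`, where
`H_α(x,r,λ) = max_{u ∈ U} λ · f(x,u) + α r`. -/
def IsViscositySolnCBVF {n m : ℕ} (f : (Fin n → ℝ) → (Fin m → ℝ) → Fin n → ℝ)
    (U : Set (Fin m → ℝ)) (α : ℝ → ℝ) (g : (Fin n → ℝ) → ℝ)
    (v : (Fin n → ℝ) × ℝ → ℝ) : Prop :=
  (∀ p : (Fin n → ℝ) × ℝ, 0 < p.2 →
    ∀ φ : (Fin n → ℝ) × ℝ → ℝ, ContDiff ℝ 1 φ →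
      IsLocalMax (fun q => v q - φ q) p →
      max (fderiv ℝ φ p ((0, 1) : (Fin n → ℝ) × ℝ) -
          (sSup ((fun u => fderiv ℝ φ p (f p.1 u, 0)) '' U) + α (v p)))
        (v p - g p.1) ≤ 0) ∧
  (∀ p : (Fin n → ℝ) × ℝ, 0 < p.2 →
    ∀ φ : (Fin n → ℝ) × ℝ → ℝ, ContDiff ℝ 1 φ →
      IsLocalMin (fun q => v q - φ q) p →
      0 ≤ max (fderiv ℝ φ p ((0, 1) : (Fin n → ℝ) × ℝ) -
          (sSup ((fun u => fderiv ℝ φ p (f p.1 u, 0)) '' U) + α (v p)))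
        (v p - g p.1))

/-- `w` is a viscosity solution on `ℝⁿ × (0,∞)` of the HJ-PDE
`max { ∂_T w - H(x, ∇w), w - β_α (g x) T } = 0`, where `H(x,λ) = max_{u ∈ U} λ · f(x,u)`. -/
def IsViscositySolnW {n m : ℕ} (f : (Fin n → ℝ) → (Fin m → ℝ) → Fin n → ℝ)
    (U : Set (Fin m → ℝ)) (β : ℝ → ℝ → ℝ) (g : (Fin n → ℝ) → ℝ)
    (w : (Fin n → ℝ) × ℝ → ℝ) : Prop :=
  (∀ p : (Fin n → ℝ) × ℝ, 0 < p.2 →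
    ∀ φ : (Fin n → ℝ) × ℝ → ℝ, ContDiff ℝ 1 φ →
      IsLocalMax (fun q => w q - φ q) p →
      max (fderiv ℝ φ p ((0, 1) : (Fin n → ℝ) × ℝ) -
          sSup ((fun u => fderiv ℝ φ p (f p.1 u, 0)) '' U))
        (w p - β (g p.1) p.2) ≤ 0) ∧
  (∀ p : (Fin n → ℝ) × ℝ, 0 < p.2 →
    ∀ φ : (Fin n → ℝ) × ℝ → ℝ, ContDiff ℝ 1 φ →
      IsLocalMin (fun q => w q - φ q) p →
      0 ≤ max (fderiv ℝ φ p ((0, 1) : (Fin n → ℝ) × ℝ) -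
          sSup ((fun u => fderiv ℝ φ p (f p.1 u, 0)) '' U))
        (w p - β (g p.1) p.2))

/-!
Whether `μ` is a viscosity solution depends only on its semidifferentials `D⁺μ(z)` and `D⁻μ(z)`.
Where `v > 0`, a primitive `A` of `1/α` straightens the flow of `y' = -α y`, so `A(w) = A(v) - T`
and the chain rule for semidifferentials gives
`D^±w = (α(w)/α(v)) • (D^±v - α(v) dT)`.
Where `v = 0`, also `w = 0`, and `c v ≤ w ≤ v` nearby for some `c > 0`, so `D^±w` and
`D^±v = D^±v - α(v) dT` (as `α(0) = 0`) span the same rays. Since `L ↦ L_T - H(x, L_x)` is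
positively homogeneous, its sign on `D^±w` is that of `L ↦ L_T - H(x, L_x) - α(v)` on `D^±v`; the
obstacles correspond because `β_α(·, T)` is strictly increasing.
-/

open scoped Pointwise

section CalculusOfC1Functions

theorem exists_contDiff_eventuallyEq {Z F : Type*} [NormedAddCommGroup Z] [NormedSpace ℝ Z]
    [HasContDiffBump Z] [NormedAddCommGroup F] [NormedSpace ℝ F] {n : ℕ} {ψ : Z → F} {z : Z}
    (hψ : ContDiffAt ℝ n ψ z) : ∃ φ : Z → F, ContDiff ℝ n φ ∧ φ =ᶠ[𝓝 z] ψ := by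
  obtain ⟨ε, hε, hball⟩ := Metric.eventually_nhds_iff_ball.1 (hψ.eventually (by simp))
  let b : ContDiffBump z := ⟨ε / 4, ε / 2, by positivity, by linarith⟩
  refine ⟨fun q => b q • ψ q, contDiff_iff_contDiffAt.2 fun x => ?_, ?_⟩
  · by_cases hx : x ∈ Metric.ball z ε
    · exact b.contDiffAt.smul (hball x hx)
    · have hxb : x ∉ tsupport b := by
        rw [b.tsupport_eq]
        exact fun hx' => hx (Metric.closedBall_subset_ball (half_lt_self hε) hx')
      refine (contDiffAt_const (c := (0 : F))).congr_of_eventuallyEq ?_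
      filter_upwards [notMem_tsupport_iff_eventuallyEq.1 hxb] with q hq
      simp [hq]
  · filter_upwards [b.eventuallyEq_one] with q hq
    simp [hq]

variable {A : ℝ → ℝ} {s : ℝ}

theorem exists_strictMonoOn_of_deriv_pos (hA : ContDiffAt ℝ 1 A s) (hA' : 0 < deriv A s) :
    ∃ u ∈ 𝓝 s, StrictMonoOn A u := by
  have hderiv : ContinuousAt (deriv A) s := (hA.derivWithin (m := 0) le_rfl).continuousAt
  have hpos : ∀ᶠ x in 𝓝 s, 0 < deriv A x := hderiv.eventually (lt_mem_nhds hA')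
  obtain ⟨ε, hε, hball⟩ := Metric.eventually_nhds_iff_ball.1 hpos
  refine ⟨Metric.ball s ε, Metric.ball_mem_nhds s hε,
    strictMonoOn_of_deriv_pos (convex_ball s ε) (fun x hx => ?_) fun x hx =>
      hball x (interior_subset hx)⟩
  exact (differentiableAt_of_deriv_ne_zero (hball x hx).ne').continuousAt.continuousWithinAt

theorem exists_contDiffAt_leftInverse (hA : ContDiffAt ℝ 1 A s) (hA' : deriv A s ≠ 0) :
    ∃ B : ℝ → ℝ, ContDiffAt ℝ 1 B (A s) ∧ deriv B (A s) = (deriv A s)⁻¹ ∧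
      ∀ᶠ x in 𝓝 s, B (A x) = x := by
  have hstrict : HasStrictDerivAt A (deriv A s) s := hA.hasStrictDerivAt one_ne_zero
  have hequiv := hstrict.hasDerivAt.hasFDerivAt_equiv hA'
  exact ⟨hstrict.localInverse A (deriv A s) s hA', hA.to_localInverse hequiv one_ne_zero,
    (hstrict.to_localInverse hA').hasDerivAt.deriv, hstrict.eventually_left_inverse hA'⟩

end CalculusOfC1Functions

section PositiveRays

variable {V : Type*} [AddCommGroup V] [Module ℝ V] {S S' : Set V}

/-- `S` and `S'` meet the same open half-lines from the origin, so that they satisfy the same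
positively homogeneous inequalities. It serves to compare semidifferentials. -/
def SamePositiveRays (S S' : Set V) : Prop :=
  (∀ x ∈ S, ∃ k : ℝ, 0 < k ∧ k • x ∈ S') ∧ (∀ x ∈ S', ∃ k : ℝ, 0 < k ∧ k • x ∈ S)

namespace SamePositiveRays

theorem of_mem_iff_smul_mem {k : ℝ} (hk : 0 < k) (h : ∀ x, x ∈ S ↔ k • x ∈ S') :
    SamePositiveRays S S' :=
  ⟨fun x hx => ⟨k, hk, (h x).1 hx⟩, fun x hx => ⟨k⁻¹, inv_pos.2 hk, (h _).2 <| by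
    rwa [smul_inv_smul₀ hk.ne']⟩⟩

protected theorem neg (h : SamePositiveRays S S') : SamePositiveRays (-S) (-S') :=
  ⟨fun x hx => (h.1 (-x) hx).imp fun _ hk => by simpa using hk,
    fun x hx => (h.2 (-x) hx).imp fun _ hk => by simpa using hk⟩

theorem forall_mem_iff (h : SamePositiveRays S S') {P : V → Prop}
    (hP : ∀ x, ∀ k : ℝ, 0 < k → (P (k • x) ↔ P x)) : (∀ x ∈ S, P x) ↔ ∀ x ∈ S', P x := by
  constructor <;> intro hS x hx
  · obtain ⟨k, hk, hkx⟩ := h.2 x hx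
    exact (hP x k hk).1 (hS _ hkx)
  · obtain ⟨k, hk, hkx⟩ := h.1 x hx
    exact (hP x k hk).1 (hS _ hkx)

end SamePositiveRays

end PositiveRays

section Semidifferentials

variable {Z : Type*} [NormedAddCommGroup Z] [NormedSpace ℝ Z]

/-- The (`C¹`) superdifferential `D⁺μ(z)`: the differentials at `z` of the functions that touch `μ`
from above at `z`. Touching functions are only required to be `C¹` near `z`. -/
def superdifferential (μ : Z → ℝ) (z : Z) : Set (Z →L[ℝ] ℝ) :=
  {L | ∃ φ : Z → ℝ, ContDiffAt ℝ 1 φ z ∧ HasFDerivAt φ L z ∧ φ z = μ z ∧ μ ≤ᶠ[𝓝 z] φ}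

/-- The (`C¹`) subdifferential `D⁻μ(z)`: the differentials at `z` of the functions that touch `μ`
from below at `z`. Touching functions are only required to be `C¹` near `z`. -/
def subdifferential (μ : Z → ℝ) (z : Z) : Set (Z →L[ℝ] ℝ) :=
  {L | ∃ φ : Z → ℝ, ContDiffAt ℝ 1 φ z ∧ HasFDerivAt φ L z ∧ φ z = μ z ∧ φ ≤ᶠ[𝓝 z] μ}

/-- Viscosity solutions on `Ω` of the first-order equation `F(z, μ, Dμ) = 0`, in terms of globally
`C¹` test functions; the differential `Dμ` is a continuous linear form. -/
def IsViscositySolution (F : Z → ℝ → (Z →L[ℝ] ℝ) → ℝ) (Ω : Set Z) (μ : Z → ℝ) : Prop :=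
  (∀ z ∈ Ω, ∀ φ : Z → ℝ, ContDiff ℝ 1 φ → IsLocalMax (fun q => μ q - φ q) z →
    F z (μ z) (fderiv ℝ φ z) ≤ 0) ∧
  (∀ z ∈ Ω, ∀ φ : Z → ℝ, ContDiff ℝ 1 φ → IsLocalMin (fun q => μ q - φ q) z →
    0 ≤ F z (μ z) (fderiv ℝ φ z))

variable {μ ω ℓ : Z → ℝ} {z : Z} {L M : Z →L[ℝ] ℝ} {A : ℝ → ℝ} {c C : ℝ}

theorem mem_subdifferential_iff_neg_mem :
    L ∈ subdifferential μ z ↔ -L ∈ superdifferential (-μ) z := by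
  constructor
  · rintro ⟨φ, hφ, hφL, hφz, hle⟩
    exact ⟨-φ, hφ.neg, hφL.neg, by simp [hφz], hle.mono fun q hq => neg_le_neg hq⟩
  · rintro ⟨φ, hφ, hφL, hφz, hle⟩
    exact ⟨-φ, hφ.neg, by simpa using hφL.neg, by simp [hφz],
      hle.mono fun q hq => neg_le.1 hq⟩

theorem subdifferential_eq_neg : subdifferential μ z = -superdifferential (-μ) z :=
  Set.ext fun _ => mem_subdifferential_iff_neg_mem

theorem mem_superdifferential_iff_exists_isLocalMax [HasContDiffBump Z] :
    L ∈ superdifferential μ z ↔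
      ∃ φ : Z → ℝ, ContDiff ℝ 1 φ ∧ fderiv ℝ φ z = L ∧ IsLocalMax (fun q => μ q - φ q) z := by
  constructor
  · rintro ⟨ψ, hψ, hψL, hψz, hle⟩
    obtain ⟨φ, hφ, hφψ⟩ := exists_contDiff_eventuallyEq (n := 1) hψ
    refine ⟨φ, hφ, (hψL.congr_of_eventuallyEq hφψ).fderiv, ?_⟩
    filter_upwards [hle, hφψ] with q hq hφq
    rw [hφq, hφψ.eq_of_nhds, hψz]
    linarith
  · rintro ⟨φ, hφ, rfl, hmax⟩
    refine ⟨fun q => φ q + (μ z - φ z), hφ.contDiffAt.add contDiffAt_const,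
      (hφ.differentiable one_ne_zero z).hasFDerivAt.add_const _, by ring,
      hmax.mono fun q hq => ?_⟩
    linarith

theorem mem_subdifferential_iff_exists_isLocalMin [HasContDiffBump Z] :
    L ∈ subdifferential μ z ↔
      ∃ φ : Z → ℝ, ContDiff ℝ 1 φ ∧ fderiv ℝ φ z = L ∧ IsLocalMin (fun q => μ q - φ q) z := by
  rw [mem_subdifferential_iff_neg_mem, mem_superdifferential_iff_exists_isLocalMax,
    (neg_surjective (G := Z → ℝ)).exists]
  refine exists_congr fun φ => and_congr ⟨fun h => by simpa using h.neg, fun h => h.neg⟩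
    (and_congr (by rw [fderiv_neg, neg_inj]) ?_)
  simp only [IsLocalMax, IsMaxFilter, IsLocalMin, IsMinFilter, Pi.neg_apply, sub_neg_eq_add]
  refine eventually_congr (Eventually.of_forall fun q => ?_)
  constructor <;> intro hq <;> linarith

theorem isViscositySolution_iff [HasContDiffBump Z] {F : Z → ℝ → (Z →L[ℝ] ℝ) → ℝ} {Ω : Set Z} :
    IsViscositySolution F Ω μ ↔
      (∀ z ∈ Ω, ∀ L ∈ superdifferential μ z, F z (μ z) L ≤ 0) ∧
      (∀ z ∈ Ω, ∀ L ∈ subdifferential μ z, 0 ≤ F z (μ z) L) := by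
  simp only [IsViscositySolution, mem_superdifferential_iff_exists_isLocalMax,
    mem_subdifferential_iff_exists_isLocalMin]
  aesop

theorem superdifferential_congr (h : μ =ᶠ[𝓝 z] ω) :
    superdifferential μ z = superdifferential ω z := by
  simp only [superdifferential, h.eq_of_nhds, eventuallyLE_congr h EventuallyEq.rfl]

theorem smul_mem_superdifferential_of_eventually_le (hc : 0 ≤ c) (hz : ω z = c * μ z)
    (h : ∀ᶠ q in 𝓝 z, ω q ≤ c * μ q) (hL : L ∈ superdifferential μ z) :
    c • L ∈ superdifferential ω z := by
  obtain ⟨φ, hφ, hφL, hφz, hle⟩ := hL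
  refine ⟨c • φ, hφ.const_smul c, hφL.const_smul c, by simp [hφz, hz], ?_⟩
  filter_upwards [h, hle] with q hq hφq
  exact hq.trans (mul_le_mul_of_nonneg_left hφq hc)

theorem add_mem_superdifferential_add (hℓ : ContDiffAt ℝ 1 ℓ z) (hL : L ∈ superdifferential μ z) :
    L + fderiv ℝ ℓ z ∈ superdifferential (μ + ℓ) z := by
  obtain ⟨φ, hφ, hφL, hφz, hle⟩ := hL
  refine ⟨φ + ℓ, hφ.add hℓ, hφL.add (hℓ.differentiableAt one_ne_zero).hasFDerivAt,
    by simp [hφz], hle.mono fun q hq => ?_⟩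
  exact add_le_add_left hq _

theorem mem_superdifferential_sub_iff (hℓ : ContDiffAt ℝ 1 ℓ z) :
    L ∈ superdifferential (μ - ℓ) z ↔ L + fderiv ℝ ℓ z ∈ superdifferential μ z := by
  constructor <;> intro hL
  · simpa using add_mem_superdifferential_add hℓ hL
  · have hneg : ContDiffAt ℝ 1 (-ℓ) z := hℓ.neg
    simpa [sub_eq_add_neg, fderiv_neg] using add_mem_superdifferential_add hneg hL

theorem deriv_smul_mem_superdifferential_comp (hA : ContDiffAt ℝ 1 A (μ z))
    (hA' : 0 < deriv A (μ z)) (hμ : ContinuousAt μ z) (hL : L ∈ superdifferential μ z) :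
    deriv A (μ z) • L ∈ superdifferential (A ∘ μ) z := by
  obtain ⟨φ, hφ, hφL, hφz, hle⟩ := hL
  obtain ⟨u, hu, hmono⟩ := exists_strictMonoOn_of_deriv_pos hA hA'
  rw [← hφz] at hA hu ⊢
  refine ⟨A ∘ φ, hA.comp z hφ,
    (hA.differentiableAt one_ne_zero).hasDerivAt.comp_hasFDerivAt z hφL, by simp [hφz], ?_⟩
  filter_upwards [hle, hμ (hφz ▸ hu), hφ.continuousAt hu] with q hq hμq hφq
  exact (hmono.le_iff_le hμq hφq).2 hq

theorem deriv_smul_mem_superdifferential_comp_iff (hA : ContDiffAt ℝ 1 A (μ z))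
    (hA' : 0 < deriv A (μ z)) (hμ : ContinuousAt μ z) :
    deriv A (μ z) • L ∈ superdifferential (A ∘ μ) z ↔ L ∈ superdifferential μ z := by
  refine ⟨fun hL => ?_, deriv_smul_mem_superdifferential_comp hA hA' hμ⟩
  obtain ⟨B, hB, hB', hBA⟩ := exists_contDiffAt_leftInverse hA hA'.ne'
  have hBL := deriv_smul_mem_superdifferential_comp (μ := A ∘ μ) hB
    (by simpa [hB'] using hA') (hA.continuousAt.comp hμ) hL
  have hBAμ : B ∘ A ∘ μ =ᶠ[𝓝 z] μ := hμ.eventually hBA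
  rwa [Function.comp_apply, hB', inv_smul_smul₀ hA'.ne', superdifferential_congr hBAμ] at hBL

theorem mem_superdifferential_iff_of_comp_eventuallyEq_sub (hAμ : ContDiffAt ℝ 1 A (μ z))
    (hAω : ContDiffAt ℝ 1 A (ω z)) (hAμ' : 0 < deriv A (μ z)) (hAω' : 0 < deriv A (ω z))
    (hμ : ContinuousAt μ z) (hω : ContinuousAt ω z) (hℓ : ContDiffAt ℝ 1 ℓ z)
    (h : A ∘ ω =ᶠ[𝓝 z] A ∘ μ - ℓ) :
    L ∈ superdifferential ω z ↔
      (deriv A (μ z))⁻¹ • (deriv A (ω z) • L + fderiv ℝ ℓ z) ∈ superdifferential μ z := by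
  rw [← deriv_smul_mem_superdifferential_comp_iff hAω hAω' hω, superdifferential_congr h,
    mem_superdifferential_sub_iff hℓ, ← deriv_smul_mem_superdifferential_comp_iff hAμ hAμ' hμ,
    smul_inv_smul₀ hAμ'.ne']

theorem mem_subdifferential_iff_of_comp_eventuallyEq_sub (hAμ : ContDiffAt ℝ 1 A (μ z))
    (hAω : ContDiffAt ℝ 1 A (ω z)) (hAμ' : 0 < deriv A (μ z)) (hAω' : 0 < deriv A (ω z))
    (hμ : ContinuousAt μ z) (hω : ContinuousAt ω z) (hℓ : ContDiffAt ℝ 1 ℓ z)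
    (h : A ∘ ω =ᶠ[𝓝 z] A ∘ μ - ℓ) :
    L ∈ subdifferential ω z ↔
      (deriv A (μ z))⁻¹ • (deriv A (ω z) • L + fderiv ℝ ℓ z) ∈ subdifferential μ z := by
  -- Apply the superdifferential case to `-ω`, `-μ`, `-ℓ` and the odd reflection of `A`.
  let A' : ℝ → ℝ := fun s => -A (-s)
  have hderiv (s : ℝ) : deriv A' (-s) = deriv A s := by
    simp [A', deriv.fun_neg, deriv_comp_neg]
  have hcont {s : ℝ} (hs : ContDiffAt ℝ 1 A s) : ContDiffAt ℝ 1 A' (-s) :=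
    (ContDiffAt.comp (-s) (by simpa using hs) contDiffAt_id.neg).neg
  have h' : A' ∘ (-ω) =ᶠ[𝓝 z] A' ∘ (-μ) - (-ℓ) := by
    filter_upwards [h] with q hq
    simp only [Function.comp_apply, Pi.sub_apply] at hq
    simp [A', hq, sub_eq_add_neg, add_comm]
  have hℓ' : ContDiffAt ℝ 1 (-ℓ) z := hℓ.neg
  rw [mem_subdifferential_iff_neg_mem, mem_subdifferential_iff_neg_mem,
    mem_superdifferential_iff_of_comp_eventuallyEq_sub (A := A') (μ := -μ) (hcont hAμ)
      (hcont hAω) (by simpa [hderiv] using hAμ') (by simpa [hderiv] using hAω') hμ.neg hω.neg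
      hℓ' h']
  simp only [Pi.neg_apply, hderiv, fderiv_neg, smul_neg, ← neg_add]

theorem samePositiveRays_superdifferential_of_mul_le (hc : 0 < c) (hC : 0 < C) (hμ : μ z = 0)
    (hω : ω z = 0) (hle : ∀ᶠ q in 𝓝 z, c * μ q ≤ ω q) (hge : ∀ᶠ q in 𝓝 z, ω q ≤ C * μ q) :
    SamePositiveRays (superdifferential ω z) (superdifferential μ z) := by
  refine ⟨fun L hL => ⟨c⁻¹, inv_pos.2 hc, ?_⟩, fun L hL => ⟨C, hC, ?_⟩⟩
  · refine smul_mem_superdifferential_of_eventually_le (inv_pos.2 hc).le (by simp [hμ, hω]) ?_ hL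
    exact hle.mono fun q hq => (le_inv_mul_iff₀ hc).2 hq
  · exact smul_mem_superdifferential_of_eventually_le hC.le (by simp [hμ, hω]) hge hL

theorem samePositiveRays_subdifferential_of_mul_le (hc : 0 < c) (hC : 0 < C) (hμ : μ z = 0)
    (hω : ω z = 0) (hle : ∀ᶠ q in 𝓝 z, c * μ q ≤ ω q) (hge : ∀ᶠ q in 𝓝 z, ω q ≤ C * μ q) :
    SamePositiveRays (subdifferential ω z) (subdifferential μ z) := by
  rw [subdifferential_eq_neg, subdifferential_eq_neg]
  refine (samePositiveRays_superdifferential_of_mul_le hC hc (by simp [hμ]) (by simp [hω])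
    (hge.mono fun q hq => ?_) (hle.mono fun q hq => ?_)).neg <;>
  · simp only [Pi.neg_apply]
    linarith

end Semidifferentials

section Flow

variable {α : ℝ → ℝ} {β : ℝ → ℝ → ℝ} {r s t : ℝ}

theorem IsClassK.pos (hα : IsClassK α) (hs : 0 < s) : 0 < α s :=
  hα.2.2 ▸ hα.2.1 self_mem_Ici hs.le hs

theorem IsLocallyLipschitzClassK.exists_le_mul (hα : IsLocallyLipschitzClassK α) (R : ℝ) :
    ∃ K : NNReal, ∀ y ∈ Icc 0 R, α y ≤ K * y := by
  have hloc : LocallyLipschitzOn (Icc 0 R) α :=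
    LocallyLipschitzOn.mono (fun x hx => hα.2 x hx) Icc_subset_Ici_self
  obtain ⟨K, hK⟩ := hloc.exists_lipschitzOnWith_of_compact isCompact_Icc
  refine ⟨K, fun y hy => ?_⟩
  have hdist := hK.dist_le_mul y hy 0 ⟨le_rfl, hy.1.trans hy.2⟩
  rw [hα.1.2.2, Real.dist_0_eq_abs, Real.dist_0_eq_abs, abs_of_nonneg hy.1] at hdist
  exact (le_abs_self _).trans hdist

/-- The time that the flow of `y' = -α y` takes from `s` down to `1` (negative if `s < 1`). As a
function of `s` it straightens this flow on `(0,∞)`. -/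
def travelTime (α : ℝ → ℝ) (s : ℝ) : ℝ :=
  ∫ x in (1 : ℝ)..s, (α x)⁻¹

theorem IsClassK.continuousOn_inv (hα : IsClassK α) :
    ContinuousOn (fun s => (α s)⁻¹) (Ioi 0) :=
  (hα.1.mono Ioi_subset_Ici_self).inv₀ fun _ hs => (hα.pos hs).ne'

theorem IsClassK.hasDerivAt_travelTime (hα : IsClassK α) (hs : 0 < s) :
    HasDerivAt (travelTime α) (α s)⁻¹ s := by
  have hsub : uIcc 1 s ⊆ Ioi 0 := fun x hx => (lt_min one_pos hs).trans_le hx.1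
  exact intervalIntegral.integral_hasDerivAt_right
    (hα.continuousOn_inv.mono hsub).intervalIntegrable
    (hα.continuousOn_inv.stronglyMeasurableAtFilter isOpen_Ioi _ hs)
    (hα.continuousOn_inv.continuousAt (Ioi_mem_nhds hs))

theorem IsClassK.deriv_travelTime_pos (hα : IsClassK α) (hs : 0 < s) :
    0 < deriv (travelTime α) s := by
  rw [(hα.hasDerivAt_travelTime hs).deriv]
  exact inv_pos.2 (hα.pos hs)

theorem IsClassK.contDiffAt_travelTime (hα : IsClassK α) (hs : 0 < s) :
    ContDiffAt ℝ 1 (travelTime α) s := by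
  have hon : ContDiffOn ℝ 1 (travelTime α) (Ioi 0) := by
    refine (contDiffOn_one_iff_derivWithin isOpen_Ioi.uniqueDiffOn).2
      ⟨fun x hx => (hα.hasDerivAt_travelTime hx).differentiableAt.differentiableWithinAt,
        hα.continuousOn_inv.congr fun x hx => ?_⟩
    rw [derivWithin_of_isOpen isOpen_Ioi hx, (hα.hasDerivAt_travelTime hx).deriv]
  exact hon.contDiffAt (Ioi_mem_nhds hs)

theorem IsClassK.strictMonoOn_travelTime (hα : IsClassK α) :
    StrictMonoOn (travelTime α) (Ioi 0) :=
  strictMonoOn_of_deriv_pos (convex_Ioi 0)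
    (fun _ hx => (hα.hasDerivAt_travelTime hx).continuousAt.continuousWithinAt)
    fun _ hx => hα.deriv_travelTime_pos (interior_subset hx)

theorem mul_exp_le_of_neg_mul_le_deriv {y y' : ℝ → ℝ} {K : ℝ}
    (hy : ∀ t, 0 ≤ t → HasDerivWithinAt y (y' t) (Ici 0) t)
    (hy' : ∀ t, 0 ≤ t → -(K * y t) ≤ y' t) (ht : 0 ≤ t) : y 0 * Real.exp (-(K * t)) ≤ y t := by
  have hderiv (s : ℝ) (hs : 0 ≤ s) : HasDerivWithinAt (fun s => y s * Real.exp (K * s))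
      (y' s * Real.exp (K * s) + y s * (Real.exp (K * s) * (K * 1))) (Ici 0) s :=
    (hy s hs).mul (((hasDerivAt_id s).const_mul K).exp.hasDerivWithinAt)
  have hmono : MonotoneOn (fun s => y s * Real.exp (K * s)) (Ici 0) := by
    refine monotoneOn_of_hasDerivWithinAt_nonneg (convex_Ici 0)
      (fun s hs => (hderiv s hs).continuousWithinAt)
      (fun s hs => (hderiv s (interior_subset hs)).mono interior_subset) fun s hs => ?_
    calc (0 : ℝ) ≤ (y' s + K * y s) * Real.exp (K * s) :=
          mul_nonneg (by linarith [hy' s (interior_subset hs)]) (Real.exp_pos _).le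
      _ = _ := by ring
  have hle : y 0 ≤ y t * Real.exp (K * t) := by simpa using hmono self_mem_Ici ht ht
  rwa [Real.exp_neg, ← div_eq_mul_inv, div_le_iff₀ (Real.exp_pos _)]

namespace IsBetaFor

theorem nonneg (hβ : IsBetaFor α β) (hr : 0 ≤ r) (ht : 0 ≤ t) : 0 ≤ β r t :=
  ((hβ r hr).2 t ht).1

theorem le (hβ : IsBetaFor α β) (hr : 0 ≤ r) (ht : 0 ≤ t) : β r t ≤ r :=
  ((hβ r hr).2 t ht).2.1

theorem hasDerivWithinAt (hβ : IsBetaFor α β) (hr : 0 ≤ r) (ht : 0 ≤ t) :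
    HasDerivWithinAt (β r) (-α (β r t)) (Ici 0) t :=
  ((hβ r hr).2 t ht).2.2

theorem apply_zero (hβ : IsBetaFor α β) (ht : 0 ≤ t) : β 0 t = 0 :=
  le_antisymm (hβ.le le_rfl ht) (hβ.nonneg le_rfl ht)

theorem exists_mul_exp_le (hα : IsLocallyLipschitzClassK α) (hβ : IsBetaFor α β) (R : ℝ) :
    ∃ K : NNReal, ∀ r ∈ Icc 0 R, ∀ t, 0 ≤ t → r * Real.exp (-(K * t)) ≤ β r t := by
  obtain ⟨K, hK⟩ := hα.exists_le_mul R
  refine ⟨K, fun r hr t ht => ?_⟩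
  have hgrowth (s : ℝ) (hs : 0 ≤ s) : -(K * β r s) ≤ -α (β r s) :=
    neg_le_neg (hK _ ⟨hβ.nonneg hr.1 hs, (hβ.le hr.1 hs).trans hr.2⟩)
  simpa only [(hβ r hr.1).1] using
    mul_exp_le_of_neg_mul_le_deriv (fun s hs => hβ.hasDerivWithinAt hr.1 hs) hgrowth ht

theorem pos (hα : IsLocallyLipschitzClassK α) (hβ : IsBetaFor α β) (hr : 0 < r) (ht : 0 ≤ t) :
    0 < β r t := by
  obtain ⟨K, hK⟩ := hβ.exists_mul_exp_le hα r
  exact (mul_pos hr (Real.exp_pos _)).trans_le (hK r ⟨hr.le, le_rfl⟩ t ht)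

theorem travelTime_apply (hα : IsLocallyLipschitzClassK α) (hβ : IsBetaFor α β) (hr : 0 < r)
    (ht : 0 ≤ t) : travelTime α (β r t) = travelTime α r - t := by
  have hderiv (s : ℝ) (hs : 0 ≤ s) :
      HasDerivWithinAt (fun s => travelTime α (β r s) + s) 0 (Ici 0) s := by
    have hpos : 0 < β r s := hβ.pos hα hr hs
    have hsum := ((hα.1.hasDerivAt_travelTime hpos).comp_hasDerivWithinAt s
      (hβ.hasDerivWithinAt hr.le hs)).add (hasDerivWithinAt_id s (Ici 0))
    rwa [mul_neg, inv_mul_cancel₀ (hα.1.pos hpos).ne', neg_add_cancel] at hsum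
  have hconst : travelTime α (β r t) + t = travelTime α (β r 0) + 0 :=
    constant_of_has_deriv_right_zero
      (fun s hs => (hderiv s hs.1).continuousWithinAt.mono Icc_subset_Ici_self)
      (fun s hs => (hderiv s hs.1).mono (Ici_subset_Ici.2 hs.1)) t ⟨ht, le_rfl⟩
  rw [(hβ r hr.le).1] at hconst
  linarith

theorem strictMonoOn (hα : IsLocallyLipschitzClassK α) (hβ : IsBetaFor α β) (ht : 0 ≤ t) :
    StrictMonoOn (fun r => β r t) (Ici 0) := by
  intro a ha b _ hab
  rcases (mem_Ici.1 ha).eq_or_lt with rfl | ha'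
  · simpa only [hβ.apply_zero ht] using hβ.pos hα hab ht
  · have hb' : 0 < b := ha'.trans hab
    refine (hα.1.strictMonoOn_travelTime.lt_iff_lt (hβ.pos hα ha' ht) (hβ.pos hα hb' ht)).1 ?_
    rw [hβ.travelTime_apply hα ha' ht, hβ.travelTime_apply hα hb' ht]
    exact sub_lt_sub_right (hα.1.strictMonoOn_travelTime ha' hb' hab) t

theorem exists_eventually_mul_le (hα : IsLocallyLipschitzClassK α) (hβ : IsBetaFor α β)
    {X : Type*} [TopologicalSpace X] {v w : X × ℝ → ℝ} {p : X × ℝ} (hp : 0 < p.2)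
    (hvc : ContinuousAt v p) (hvw : ∀ᶠ q in 𝓝 p, 0 ≤ v q ∧ β (v q) q.2 = w q) :
    ∃ c : ℝ, 0 < c ∧ ∀ᶠ q in 𝓝 p, c * v q ≤ w q := by
  obtain ⟨K, hK⟩ := hβ.exists_mul_exp_le hα (v p + 1)
  refine ⟨Real.exp (-(K * (p.2 + 1))), Real.exp_pos _, ?_⟩
  have hsnd : ContinuousAt Prod.snd p := continuousAt_snd
  filter_upwards [hvw, hvc.eventually (gt_mem_nhds (lt_add_one _)),
    hsnd.eventually (lt_mem_nhds hp), hsnd.eventually (gt_mem_nhds (lt_add_one _))]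
    with q ⟨hvq, hwq⟩ hvlt hq hqlt
  calc Real.exp (-(K * (p.2 + 1))) * v q ≤ Real.exp (-(K * q.2)) * v q := by gcongr
    _ = v q * Real.exp (-(K * q.2)) := mul_comm _ _
    _ ≤ w q := hwq ▸ hK _ ⟨hvq, hvlt.le⟩ _ hq.le

end IsBetaFor

end Flow

section ValueFunctions

variable {E : Type*} [NormedAddCommGroup E] [NormedSpace ℝ E] {α : ℝ → ℝ} {β : ℝ → ℝ → ℝ}
  {v w : E × ℝ → ℝ} {p : E × ℝ}

theorem samePositiveRays_semidifferentials_of_pos (hα : IsLocallyLipschitzClassK α)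
    (hβ : IsBetaFor α β) (hp : 0 < p.2) (hvp : 0 < v p) (hvc : ContinuousAt v p)
    (hwc : ContinuousAt w p) (hvw : ∀ᶠ q in 𝓝 p, β (v q) q.2 = w q) :
    SamePositiveRays (superdifferential w p)
        ((· + α (v p) • ContinuousLinearMap.snd ℝ E ℝ) ⁻¹' superdifferential v p) ∧
      SamePositiveRays (subdifferential w p)
        ((· + α (v p) • ContinuousLinearMap.snd ℝ E ℝ) ⁻¹' subdifferential v p) := by
  have hwp : 0 < w p := hvw.self_of_nhds ▸ hβ.pos hα hvp hp.le
  have hstraight : travelTime α ∘ w =ᶠ[𝓝 p] travelTime α ∘ v - Prod.snd := by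
    filter_upwards [hvw, continuousAt_snd.eventually (lt_mem_nhds hp),
      hvc.eventually (lt_mem_nhds hvp)] with q hq hq2 hvq
    simp only [Function.comp_apply, Pi.sub_apply, ← hq, hβ.travelTime_apply hα hvq hq2.le]
  have hscale (L : E × ℝ →L[ℝ] ℝ) : (deriv (travelTime α) (v p))⁻¹ •
      (deriv (travelTime α) (w p) • L + fderiv ℝ Prod.snd p) =
        (α (v p) * (α (w p))⁻¹) • L + α (v p) • ContinuousLinearMap.snd ℝ E ℝ := by
    rw [(hα.1.hasDerivAt_travelTime hvp).deriv, (hα.1.hasDerivAt_travelTime hwp).deriv,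
      fderiv_snd, inv_inv, smul_add, smul_smul]
  have hpos : 0 < α (v p) * (α (w p))⁻¹ := mul_pos (hα.1.pos hvp) (inv_pos.2 (hα.1.pos hwp))
  refine ⟨.of_mem_iff_smul_mem hpos fun L => ?_, .of_mem_iff_smul_mem hpos fun L => ?_⟩
  · rw [mem_superdifferential_iff_of_comp_eventuallyEq_sub (hα.1.contDiffAt_travelTime hvp)
      (hα.1.contDiffAt_travelTime hwp) (hα.1.deriv_travelTime_pos hvp)
      (hα.1.deriv_travelTime_pos hwp) hvc hwc contDiffAt_snd hstraight, hscale, mem_preimage]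
  · rw [mem_subdifferential_iff_of_comp_eventuallyEq_sub (hα.1.contDiffAt_travelTime hvp)
      (hα.1.contDiffAt_travelTime hwp) (hα.1.deriv_travelTime_pos hvp)
      (hα.1.deriv_travelTime_pos hwp) hvc hwc contDiffAt_snd hstraight, hscale, mem_preimage]

theorem samePositiveRays_semidifferentials (hα : IsLocallyLipschitzClassK α)
    (hβ : IsBetaFor α β) (hp : 0 < p.2) (hvc : ContinuousAt v p) (hwc : ContinuousAt w p)
    (hvw : ∀ᶠ q in 𝓝 p, 0 ≤ v q ∧ β (v q) q.2 = w q) :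
    SamePositiveRays (superdifferential w p)
        ((· + α (v p) • ContinuousLinearMap.snd ℝ E ℝ) ⁻¹' superdifferential v p) ∧
      SamePositiveRays (subdifferential w p)
        ((· + α (v p) • ContinuousLinearMap.snd ℝ E ℝ) ⁻¹' subdifferential v p) := by
  obtain ⟨hv0, hvwp⟩ := hvw.self_of_nhds
  rcases hv0.eq_or_lt with hvp | hvp
  · -- `travelTime` is unavailable at height `0`, but there `c * v ≤ w ≤ v` is enough.
    have hwp : w p = 0 := by rw [← hvwp, ← hvp, hβ.apply_zero hp.le]
    obtain ⟨c, hc, hle⟩ := hβ.exists_eventually_mul_le hα hp hvc hvw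
    have hge : ∀ᶠ q in 𝓝 p, w q ≤ 1 * v q := by
      filter_upwards [hvw, continuousAt_snd.eventually (lt_mem_nhds hp)] with q ⟨hvq, hwq⟩ hq
      rw [one_mul, ← hwq]
      exact hβ.le hvq hq.le
    simp only [← hvp, hα.1.2.2, zero_smul, add_zero, preimage_id']
    exact ⟨samePositiveRays_superdifferential_of_mul_le hc one_pos hvp.symm hwp hle hge,
      samePositiveRays_subdifferential_of_mul_le hc one_pos hvp.symm hwp hle hge⟩
  · exact samePositiveRays_semidifferentials_of_pos hα hβ hp hvp hvc hwc
      (hvw.mono fun _ hq => hq.2)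

/-- The Hamilton–Jacobi operator `∂_T - H(∇)` as a function of the differential `L` on space-time
`E × ℝ`, whose time component is `L (0, 1)` and whose space component is `L ∘ inl`. -/
def hamiltonJacobi (H : (E →L[ℝ] ℝ) → ℝ) (L : E × ℝ →L[ℝ] ℝ) : ℝ :=
  L (0, 1) - H (L.comp (.inl ℝ E ℝ))

theorem hamiltonJacobi_smul {H : (E →L[ℝ] ℝ) → ℝ} {k : ℝ} (hH : ∀ ξ, H (k • ξ) = k * H ξ)
    (L : E × ℝ →L[ℝ] ℝ) : hamiltonJacobi H (k • L) = k * hamiltonJacobi H L := by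
  simp [hamiltonJacobi, ContinuousLinearMap.smul_comp, hH, mul_sub]

theorem hamiltonJacobi_add_const (H : (E →L[ℝ] ℝ) → ℝ) (c : ℝ) (L : E × ℝ →L[ℝ] ℝ) :
    hamiltonJacobi (fun ξ => H ξ + c) (L + c • .snd ℝ E ℝ) = hamiltonJacobi H L := by
  have hspace : (L + c • ContinuousLinearMap.snd ℝ E ℝ).comp (.inl ℝ E ℝ) =
      L.comp (.inl ℝ E ℝ) := by
    ext
    simp
  simp [hamiltonJacobi, hspace]

theorem SamePositiveRays.forall_hamiltonJacobi_iff {H : (E →L[ℝ] ℝ) → ℝ}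
    (hH : ∀ k > 0, ∀ ξ, H (k • ξ) = k * H ξ) {S S' : Set (E × ℝ →L[ℝ] ℝ)} {c : ℝ}
    (h : SamePositiveRays S ((· + c • ContinuousLinearMap.snd ℝ E ℝ) ⁻¹' S')) {P : ℝ → Prop}
    (hP : ∀ x k : ℝ, 0 < k → (P (k * x) ↔ P x)) :
    (∀ L ∈ S, P (hamiltonJacobi H L)) ↔
      ∀ L ∈ S', P (hamiltonJacobi (fun ξ => H ξ + c) L) := by
  have hPsmul (L : E × ℝ →L[ℝ] ℝ) (k : ℝ) (hk : 0 < k) :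
      P (hamiltonJacobi H (k • L)) ↔ P (hamiltonJacobi H L) := by
    rw [hamiltonJacobi_smul (hH k hk), hP _ k hk]
  refine (h.forall_mem_iff hPsmul).trans (Iff.symm ?_)
  rw [(add_right_surjective (c • ContinuousLinearMap.snd ℝ E ℝ)).forall]
  simp only [mem_preimage, hamiltonJacobi_add_const]

theorem v_w_viscosity_equivalence_general [HasContDiffBump (E × ℝ)]
    {H : E × ℝ → (E →L[ℝ] ℝ) → ℝ} (hH : ∀ p, ∀ k > 0, ∀ ξ, H p (k • ξ) = k * H p ξ)
    (hα : IsLocallyLipschitzClassK α) (hβ : IsBetaFor α β) {g : E × ℝ → ℝ} (hg : ∀ p, 0 ≤ g p)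
    (hvc : ContinuousOn v {p | 0 < p.2}) (hwc : ContinuousOn w {p | 0 < p.2})
    (hv : ∀ p, 0 < p.2 → 0 ≤ v p) (hvw : ∀ p, 0 < p.2 → β (v p) p.2 = w p) :
    IsViscositySolution (fun p r L => max (hamiltonJacobi (H p) L) (r - β (g p) p.2))
        {p | 0 < p.2} w ↔
      IsViscositySolution (fun p r L => max (hamiltonJacobi (fun ξ => H p ξ + α r) L) (r - g p))
        {p | 0 < p.2} v := by
  have hopen : IsOpen {p : E × ℝ | 0 < p.2} := isOpen_lt continuous_const continuous_snd
  have hmono (p : E × ℝ) (hp : 0 < p.2) := hβ.strictMonoOn hα hp.le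
  have hrays (p : E × ℝ) (hp : p ∈ {p : E × ℝ | 0 < p.2}) :=
    samePositiveRays_semidifferentials hα hβ hp (hvc.continuousAt (hopen.mem_nhds hp))
      (hwc.continuousAt (hopen.mem_nhds hp)) <|
      (hopen.eventually_mem hp).mono fun q hq => ⟨hv q hq, hvw q hq⟩
  rw [isViscositySolution_iff, isViscositySolution_iff]
  refine and_congr (forall₂_congr fun p hp => ?_) (forall₂_congr fun p hp => ?_)
  · have hobstacle : w p ≤ β (g p) p.2 ↔ v p ≤ g p := by
      rw [← hvw p hp]
      exact (hmono p hp).le_iff_le (hv p hp) (hg p)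
    simp only [max_le_iff, sub_nonpos (b := β (g p) p.2), sub_nonpos (b := g p), hobstacle]
    exact (hrays p hp).1.forall_hamiltonJacobi_iff (hH p) (P := fun x => x ≤ 0 ∧ v p ≤ g p)
      fun x k hk => by
        simp only [mul_nonpos_iff, hk.le, hk.not_ge, true_and, false_and, or_false]
  · have hobstacle : β (g p) p.2 ≤ w p ↔ g p ≤ v p := by
      rw [← hvw p hp]
      exact (hmono p hp).le_iff_le (hg p) (hv p hp)
    simp only [le_max_iff, sub_nonneg (b := β (g p) p.2), sub_nonneg (b := g p), hobstacle]
    exact (hrays p hp).2.forall_hamiltonJacobi_iff (hH p) (P := fun x => 0 ≤ x ∨ g p ≤ v p)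
      fun x k hk => by rw [mul_nonneg_iff_of_pos_left hk]

end ValueFunctions

theorem sSup_image_const_mul {ι : Type*} (F : ι → ℝ) (U : Set ι) {k : ℝ} (hk : 0 ≤ k) :
    sSup ((fun u => k * F u) '' U) = k * sSup (F '' U) := by
  rw [← smul_eq_mul, ← Real.sSup_smul_of_nonneg hk, ← image_smul, image_image]
  simp only [smul_eq_mul]

/-- If `v, w : ℝⁿ × [0,∞) → [0,∞)` are continuous and
`β_α (v (x,T)) T = w (x,T)`, then `w` is a viscosity solution on `ℝⁿ × (0,∞)` of
`max { ∂_T w - H(x,∇w), w - β_α (g x) T } = 0` iff `v` is a viscosity solution on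
`ℝⁿ × (0,∞)` of `max { ∂_T v - H_α(x,v,∇v), v - g x } = 0`. -/
theorem v_w_viscosity_equivalence {n m : ℕ}
    (f : (Fin n → ℝ) → (Fin m → ℝ) → Fin n → ℝ) (U : Set (Fin m → ℝ))
    (hU : IsCompact U)
    (hf : ∃ K : NNReal, LipschitzOnWith K (Function.uncurry f) (Set.univ ×ˢ U))
    (α : ℝ → ℝ) (hα : IsLocallyLipschitzClassK α)
    (β : ℝ → ℝ → ℝ) (hβ : IsBetaFor α β)
    (g : (Fin n → ℝ) → ℝ) (hg : Continuous g) (hg0 : ∀ x, 0 ≤ g x)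
    (v w : (Fin n → ℝ) × ℝ → ℝ)
    (hvc : ContinuousOn v {p : (Fin n → ℝ) × ℝ | 0 ≤ p.2})
    (hwc : ContinuousOn w {p : (Fin n → ℝ) × ℝ | 0 ≤ p.2})
    (hv0 : ∀ p : (Fin n → ℝ) × ℝ, 0 ≤ p.2 → 0 ≤ v p)
    (hw0 : ∀ p : (Fin n → ℝ) × ℝ, 0 ≤ p.2 → 0 ≤ w p)
    (hvw : ∀ p : (Fin n → ℝ) × ℝ, 0 ≤ p.2 → β (v p) p.2 = w p) :
    IsViscositySolnW f U β g w ↔ IsViscositySolnCBVF f U α g v := by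
  have hsub : {p : (Fin n → ℝ) × ℝ | 0 < p.2} ⊆ {p | 0 ≤ p.2} :=
    fun p (hp : 0 < p.2) => hp.le
  exact v_w_viscosity_equivalence_general (g := fun p => g p.1)
    (H := fun p ξ => sSup ((fun u => ξ (f p.1 u)) '' U))
    (fun _ _ hk _ => sSup_image_const_mul _ U hk.le) hα hβ (fun p => hg0 p.1) (hvc.mono hsub)
    (hwc.mono hsub) (fun p hp => hv0 p (hsub hp)) fun p hp => hvw p (hsub hp)
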